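/- Let H be a Hopf algebra and A a left H-module. The map H ⊗ A → A ⊗ H given by h ⊗ a ↦ (h⁽¹⁾ ▷ a) ⊗ h⁽²⁾ (where ▷ is the module action and H acts on itself by the adjoint action) is H-equivariant, when H ⊗ A and A ⊗ H carry the tensor product H-module structures with H acting on the H-factor adjointly. -/

import Mathlib

/-!
STATEMENT 1: For a Hopf algebra `H` and a left `H`-module `A`, the map
`H ⊗ A → A ⊗ H`, `h ⊗ a ↦ (h⁽¹⁾ ▷ a) ⊗ h⁽²⁾` is `H`-equivariant, where `H`
acts on the `H`-factor of either tensor product by the adjoint action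
`x ▷ a = x⁽¹⁾ a γ(x⁽²⁾)` and on the `A`-factor by the given module action,
the tensor products carrying the diagonal (coproduct) action.
-/

open TensorProduct LinearMap

noncomputable section

variable (k : Type*) [CommRing k]

/-- The "rotation" `(A ⊗ B) ⊗ C → (A ⊗ C) ⊗ B`. -/
def rot3 (A B C : Type*) [AddCommGroup A] [Module k A] [AddCommGroup B] [Module k B]
    [AddCommGroup C] [Module k C] :
    (A ⊗[k] B) ⊗[k] C →ₗ[k] (A ⊗[k] C) ⊗[k] B :=
  (TensorProduct.assoc k A C B).symm.toLinearMap ∘ₗ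
    (LinearMap.lTensor A (TensorProduct.comm k B C).toLinearMap) ∘ₗ
    (TensorProduct.assoc k A B C).toLinearMap

variable (H : Type*) [Ring H] [HopfAlgebra k H]

/-- The left adjoint action of a Hopf algebra on itself, `x ⊗ a ↦ x⁽¹⁾ a γ(x⁽²⁾)`,
as a linear map `H ⊗ H → H`. -/
def adjAction : H ⊗[k] H →ₗ[k] H :=
  (LinearMap.mul' k H) ∘ₗ
    (LinearMap.lTensor H ((LinearMap.mul' k H) ∘ₗ
      (LinearMap.lTensor H (HopfAlgebra.antipode (R := k))))) ∘ₗ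
    (LinearMap.lTensor H (TensorProduct.comm k H H).toLinearMap) ∘ₗ
    (TensorProduct.assoc k H H H).toLinearMap ∘ₗ
    (LinearMap.rTensor H (Coalgebra.comul (R := k)))

/-- The diagonal (tensor product) action of `H` on `B ⊗ C`, built from actions of `H`
on `B` and on `C` via the coproduct. -/
def tensorAction {B C : Type*} [AddCommGroup B] [Module k B] [AddCommGroup C] [Module k C]
    (actB : H ⊗[k] B →ₗ[k] B) (actC : H ⊗[k] C →ₗ[k] C) :
    H ⊗[k] (B ⊗[k] C) →ₗ[k] B ⊗[k] C :=
  (TensorProduct.map actB actC) ∘ₗ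
    (TensorProduct.tensorTensorTensorComm k H H B C).toLinearMap ∘ₗ
    (LinearMap.rTensor (B ⊗[k] C) (Coalgebra.comul (R := k)))

variable {k H}

/-!
The map is the braiding attached to `H` with its adjoint action and its coproduct as coaction.
Such a braiding is natural in the module `A`, and the orbit map `h ↦ h ▷ a` is a module map
carrying `1` to `a`, so equivariance need only be checked for the regular module at the elements
`h ⊗ 1`, where it is the Yetter–Drinfeld condition
`Δ(x⁽¹⁾ ▷ h) (x⁽²⁾ ⊗ 1) = x⁽¹⁾ h⁽¹⁾ ⊗ (x⁽²⁾ ▷ h⁽²⁾)`. Expanding `Δ(x⁽¹⁾ h γ(x⁽²⁾))` reduces this to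
`Δ(γ(x⁽¹⁾)) (x⁽²⁾ ⊗ 1) = 1 ⊗ γ(x)`, which holds in the convolution algebra of linear maps
`H → H ⊗ H`: there `Δ` is the product of `x ↦ x ⊗ 1` and `x ↦ 1 ⊗ x`, and composing an algebra map
with `γ` inverts it.
-/

section Convolution

open Coalgebra HopfAlgebra WithConv

variable {R : Type*} [CommSemiring R]

theorem mulLeft_comp_convMul {C K : Type*} [AddCommMonoid C] [Module R C] [CoalgebraStruct R C]
    [NonUnitalSemiring K] [Module R K] [SMulCommClass R K K] [IsScalarTower R K K]
    (d : K) (f g : WithConv (C →ₗ[R] K)) :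
    toConv (mulLeft R d ∘ₗ (f * g).ofConv) = toConv (mulLeft R d ∘ₗ f.ofConv) * g := by
  ext c
  simp [(ℛ R c).convMul_apply, -LinearMap.convMul_apply, mul_assoc]

theorem includeLeft_convMul_includeRight (C : Type*) [Semiring C] [Algebra R C]
    [CoalgebraStruct R C] :
    toConv (Algebra.TensorProduct.includeLeft : C →ₐ[R] C ⊗[R] C).toLinearMap *
      toConv (Algebra.TensorProduct.includeRight : C →ₐ[R] C ⊗[R] C).toLinearMap =
      toConv (comul : C →ₗ[R] C ⊗[R] C) := by
  ext c
  rw [(ℛ R c).convMul_apply]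
  simp [(ℛ R c).eq]

variable {L : Type*} [Semiring L] [HopfAlgebra R L]

theorem algHom_convMul_comp_antipode {K : Type*} [Semiring K] [Algebra R K] (f : L →ₐ[R] K) :
    toConv f.toLinearMap * toConv (f.toLinearMap ∘ₗ antipode R) = 1 := by
  have h := algHom_comp_convMul_distrib f (toConv .id) (toConv (antipode R))
  rw [id_mul_antipode] at h
  refine (WithConv.ofConv_injective h).symm.trans ?_
  ext x
  simp [LinearMap.convOne_def]

theorem comp_antipode_convMul_algHom {K : Type*} [Semiring K] [Algebra R K] (f : L →ₐ[R] K) :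
    toConv (f.toLinearMap ∘ₗ antipode R) * toConv f.toLinearMap = 1 := by
  have h := algHom_comp_convMul_distrib f (toConv (antipode R)) (toConv .id)
  rw [antipode_mul_id] at h
  refine (WithConv.ofConv_injective h).symm.trans ?_
  ext x
  simp [LinearMap.convOne_def]

variable (R L) in
theorem comul_antipode_convMul_includeLeft :
    toConv (comul ∘ₗ antipode R) *
        toConv (Algebra.TensorProduct.includeLeft : L →ₐ[R] L ⊗[R] L).toLinearMap =
      toConv ((Algebra.TensorProduct.includeRight : L →ₐ[R] L ⊗[R] L).toLinearMap ∘ₗ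
        antipode R) := by
  have comul_inv : toConv (comul ∘ₗ antipode R) * toConv (comul : L →ₗ[R] L ⊗[R] L) = 1 :=
    comp_antipode_convMul_algHom (Bialgebra.comulAlgHom R L)
  rw [← includeLeft_convMul_includeRight, ← mul_assoc] at comul_inv
  exact left_inv_eq_right_inv comul_inv (algHom_convMul_comp_antipode _)

end Convolution

section TensorAction

variable {A B C V : Type*} [AddCommGroup A] [Module k A] [AddCommGroup B] [Module k B]
  [AddCommGroup C] [Module k C] [AddCommGroup V] [Module k V]

theorem tensorAction_tmul {ι : Type*} (actB : H ⊗[k] B →ₗ[k] B) (actC : H ⊗[k] C →ₗ[k] C)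
    {x : H} (𝓡 : Coalgebra.Repr k x ι) (b : B) (c : C) :
    tensorAction k H actB actC (x ⊗ₜ (b ⊗ₜ c)) =
      ∑ i ∈ 𝓡.index, actB (𝓡.left i ⊗ₜ b) ⊗ₜ actC (𝓡.right i ⊗ₜ c) := by
  simp [tensorAction, ← 𝓡.eq, sum_tmul]

theorem tensorAction_rTensor {actA : H ⊗[k] A →ₗ[k] A} {actB : H ⊗[k] B →ₗ[k] B}
    (actC : H ⊗[k] C →ₗ[k] C) {f : A →ₗ[k] B}
    (hf : ∀ x a, f (actA (x ⊗ₜ a)) = actB (x ⊗ₜ f a)) (x : H) (t : A ⊗[k] C) :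
    tensorAction k H actB actC (x ⊗ₜ f.rTensor C t) =
      f.rTensor C (tensorAction k H actA actC (x ⊗ₜ t)) := by
  induction t with
  | zero => simp
  | add s t hs ht => simp only [map_add, tmul_add, hs, ht]
  | tmul a c => simp [tensorAction_tmul _ _ (Coalgebra.Repr.arbitrary k x), hf]

theorem tensorAction_lTensor {actA : H ⊗[k] A →ₗ[k] A} {actB : H ⊗[k] B →ₗ[k] B}
    (actC : H ⊗[k] C →ₗ[k] C) {f : A →ₗ[k] B}
    (hf : ∀ x a, f (actA (x ⊗ₜ a)) = actB (x ⊗ₜ f a)) (x : H) (t : C ⊗[k] A) :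
    tensorAction k H actC actB (x ⊗ₜ f.lTensor C t) =
      f.lTensor C (tensorAction k H actC actA (x ⊗ₜ t)) := by
  induction t with
  | zero => simp
  | add s t hs ht => simp only [map_add, tmul_add, hs, ht]
  | tmul c a => simp [tensorAction_tmul _ _ (Coalgebra.Repr.arbitrary k x), hf]

/-- The braiding `V ⊗ A → A ⊗ V`, `v ⊗ a ↦ (v⁽⁻¹⁾ ▷ a) ⊗ v⁽⁰⁾`, attached to a coaction
`ρ v = v⁽⁻¹⁾ ⊗ v⁽⁰⁾` on `V` and an action on `A`. -/
def coactionBraiding (ρ : V →ₗ[k] H ⊗[k] V) (act : H ⊗[k] A →ₗ[k] A) :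
    V ⊗[k] A →ₗ[k] A ⊗[k] V :=
  act.rTensor V ∘ₗ rot3 k H V A ∘ₗ ρ.rTensor A

theorem coactionBraiding_tmul (ρ : V →ₗ[k] H ⊗[k] V) (act : H ⊗[k] A →ₗ[k] A) (v : V) (a : A) :
    coactionBraiding ρ act (v ⊗ₜ a) =
      (act ∘ₗ (TensorProduct.mk k H A).flip a).rTensor V (ρ v) := by
  simp only [coactionBraiding, comp_apply, rTensor_tmul]
  induction ρ v with
  | zero => simp
  | add s t hs ht => simp only [map_add, add_tmul, hs, ht]
  | tmul h w => simp [rot3]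

theorem coactionBraiding_lTensor (ρ : V →ₗ[k] H ⊗[k] V) {actA : H ⊗[k] A →ₗ[k] A}
    {actB : H ⊗[k] B →ₗ[k] B} {f : A →ₗ[k] B}
    (hf : ∀ x a, f (actA (x ⊗ₜ a)) = actB (x ⊗ₜ f a)) (t : V ⊗[k] A) :
    coactionBraiding ρ actB (f.lTensor V t) = f.rTensor V (coactionBraiding ρ actA t) := by
  induction t with
  | zero => simp
  | add s t hs ht => simp only [map_add, hs, ht]
  | tmul v a =>
    rw [lTensor_tmul, coactionBraiding_tmul, coactionBraiding_tmul, ← rTensor_comp_apply]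
    congr 2
    ext x
    simp [hf]

/-- The Yetter–Drinfeld compatibility between an action and a coaction on `V`:
`(x⁽¹⁾ ▷ v)⁽⁻¹⁾ x⁽²⁾ ⊗ (x⁽¹⁾ ▷ v)⁽⁰⁾ = x⁽¹⁾ v⁽⁻¹⁾ ⊗ x⁽²⁾ ▷ v⁽⁰⁾`. It is encoded as the
equivariance, at the elements `v ⊗ 1`, of the braiding of `V` with the regular module `H`. -/
def IsYetterDrinfeld (actV : H ⊗[k] V →ₗ[k] V) (ρ : V →ₗ[k] H ⊗[k] V) : Prop :=
  ∀ (x : H) (v : V),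
    coactionBraiding ρ (mul' k H) (tensorAction k H actV (mul' k H) (x ⊗ₜ (v ⊗ₜ 1))) =
      tensorAction k H (mul' k H) actV (x ⊗ₜ ρ v)

theorem IsYetterDrinfeld.coactionBraiding_tensorAction {actV : H ⊗[k] V →ₗ[k] V}
    {ρ : V →ₗ[k] H ⊗[k] V} (hV : IsYetterDrinfeld actV ρ) {act : H ⊗[k] A →ₗ[k] A}
    (act_one : ∀ a : A, act ((1 : H) ⊗ₜ[k] a) = a)
    (act_mul : ∀ (x y : H) (a : A), act ((x * y) ⊗ₜ[k] a) = act (x ⊗ₜ[k] act (y ⊗ₜ[k] a)))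
    (x : H) (v : V) (a : A) :
    coactionBraiding ρ act (tensorAction k H actV act (x ⊗ₜ (v ⊗ₜ a))) =
      tensorAction k H act actV (x ⊗ₜ coactionBraiding ρ act (v ⊗ₜ a)) := by
  let orbit : H →ₗ[k] A := act ∘ₗ (TensorProduct.mk k H A).flip a
  have orbit_mul (y z : H) : orbit (mul' k H (y ⊗ₜ z)) = act (y ⊗ₜ orbit z) := act_mul y z a
  have tmul_eq : v ⊗ₜ[k] a = orbit.lTensor V (v ⊗ₜ 1) := by simp [orbit, act_one]
  calc
    coactionBraiding ρ act (tensorAction k H actV act (x ⊗ₜ (v ⊗ₜ a)))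
      = orbit.rTensor V (coactionBraiding ρ (mul' k H)
          (tensorAction k H actV (mul' k H) (x ⊗ₜ (v ⊗ₜ 1)))) := by
        rw [tmul_eq, tensorAction_lTensor actV orbit_mul, coactionBraiding_lTensor ρ orbit_mul]
    _ = orbit.rTensor V (tensorAction k H (mul' k H) actV (x ⊗ₜ ρ v)) := by rw [hV]
    _ = tensorAction k H act actV (x ⊗ₜ orbit.rTensor V (ρ v)) :=
        (tensorAction_rTensor actV orbit_mul x (ρ v)).symm
    _ = tensorAction k H act actV (x ⊗ₜ coactionBraiding ρ act (v ⊗ₜ a)) := by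
        rw [coactionBraiding_tmul]

end TensorAction

section AdjointAction

open Coalgebra HopfAlgebra WithConv

theorem adjAction_tmul {ι : Type*} {x : H} (𝓡 : Coalgebra.Repr k x ι) (h : H) :
    adjAction k H (x ⊗ₜ h) = ∑ i ∈ 𝓡.index, 𝓡.left i * (h * antipode k (𝓡.right i)) := by
  simp [adjAction, ← 𝓡.eq, sum_tmul]

theorem algHom_adjAction_tmul {K : Type*} [Semiring K] [Algebra k K] (f : H →ₐ[k] K) (x h : H) :
    f (adjAction k H (x ⊗ₜ h)) = (toConv f.toLinearMap *
      toConv (mulLeft k (f h) ∘ₗ f.toLinearMap ∘ₗ antipode k)) x := by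
  rw [(ℛ k x).convMul_apply]
  simp [adjAction_tmul (ℛ k x)]

theorem tensorAction_mul'_adjAction (x : H) (d : H ⊗[k] H) :
    tensorAction k H (mul' k H) (adjAction k H) (x ⊗ₜ d) =
      (toConv (comul : H →ₗ[k] H ⊗[k] H) * toConv (mulLeft k d ∘ₗ
        (Algebra.TensorProduct.includeRight : H →ₐ[k] H ⊗[k] H).toLinearMap ∘ₗ antipode k)) x := by
  rw [← includeLeft_convMul_includeRight, mul_assoc, (ℛ k x).convMul_apply]
  simp_rw [(ℛ k _).convMul_apply]
  induction d with
  | zero => simp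
  | add s t hs ht =>
    rw [tmul_add, map_add, hs, ht]
    simp [add_mul, mul_add, Finset.sum_add_distrib]
  | tmul p q =>
    simp [tensorAction_tmul _ _ (ℛ k x), adjAction_tmul (ℛ k _), tmul_sum, Finset.mul_sum]

theorem coactionBraiding_comul_mul' (h y : H) :
    coactionBraiding comul (mul' k H) (h ⊗ₜ y) = comul h * y ⊗ₜ[k] (1 : H) := by
  rw [coactionBraiding_tmul]
  simp [← (ℛ k h).eq, Finset.sum_mul]

variable (k H) in
theorem isYetterDrinfeld_adjAction_comul : IsYetterDrinfeld (adjAction k H) comul := by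
  intro x h
  let ι₁ := (Algebra.TensorProduct.includeLeft : H →ₐ[k] H ⊗[k] H).toLinearMap
  let ι₂ := (Algebra.TensorProduct.includeRight : H →ₐ[k] H ⊗[k] H).toLinearMap
  let Δ : H →ₗ[k] H ⊗[k] H := comul
  calc
    coactionBraiding comul (mul' k H) (tensorAction k H (adjAction k H) (mul' k H) (x ⊗ₜ (h ⊗ₜ 1)))
      = (toConv Δ * toConv (mulLeft k (Δ h) ∘ₗ Δ ∘ₗ antipode k) * toConv ι₁) x := by
        rw [(ℛ k x).convMul_apply, tensorAction_tmul _ _ (ℛ k x), map_sum]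
        refine Finset.sum_congr rfl fun i _ ↦ ?_
        rw [coactionBraiding_comul_mul', mul'_apply, mul_one]
        exact congrArg (· * _) (algHom_adjAction_tmul (Bialgebra.comulAlgHom k H) _ h)
    _ = (toConv Δ * toConv (mulLeft k (Δ h) ∘ₗ ι₂ ∘ₗ antipode k)) x := by
        have antipode_cancel := mulLeft_comp_convMul (Δ h) (toConv (Δ ∘ₗ antipode k)) (toConv ι₁)
        rw [comul_antipode_convMul_includeLeft] at antipode_cancel
        rw [mul_assoc, ← antipode_cancel]
    _ = tensorAction k H (mul' k H) (adjAction k H) (x ⊗ₜ Δ h) :=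
        (tensorAction_mul'_adjAction x (Δ h)).symm

end AdjointAction

theorem statement1 (A : Type*) [AddCommGroup A] [Module k A]
    (act : H ⊗[k] A →ₗ[k] A)
    -- `A` is a left `H`-module:
    (act_one : ∀ a : A, act ((1 : H) ⊗ₜ[k] a) = a)
    (act_mul : ∀ (x y : H) (a : A), act ((x * y) ⊗ₜ[k] a) = act (x ⊗ₜ[k] act (y ⊗ₜ[k] a))) :
    -- the map `h ⊗ a ↦ (h⁽¹⁾ ▷ a) ⊗ h⁽²⁾` is `H`-equivariant:
    ((LinearMap.rTensor H act) ∘ₗ (rot3 k H H A) ∘ₗ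
        (LinearMap.rTensor A (Coalgebra.comul (R := k)))) ∘ₗ
      (tensorAction k H (adjAction k H) act)
    = (tensorAction k H act (adjAction k H)) ∘ₗ
        (LinearMap.lTensor H ((LinearMap.rTensor H act) ∘ₗ (rot3 k H H A) ∘ₗ
          (LinearMap.rTensor A (Coalgebra.comul (R := k))))) := by
  apply TensorProduct.ext
  ext x : 1
  apply TensorProduct.ext'
  intro h a
  exact (isYetterDrinfeld_adjAction_comul k H).coactionBraiding_tensorAction act_one act_mul x h a

end
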